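/- arXiv:1508.02940 — 2 statements merged into one kernel-verified Lean document; each statement's English description precedes it below -/
import Mathlib

section
/- Let m ∈ ℤ₊ and consider the knapsack polytope P = {(x,y) ∈ [0,1]^{2m} : 2(x₁+y₁) + 2²(x₂+y₂) + … + 2^m(x_m+y_m) ≤ 2^{m+1} − 1} in dimension n = 2m. Let W, W' ∈ ℤ^{k×m} be integer matrices and let Q = conv({(x,y) ∈ P : Wx + W'y ∈ ℤ^k}). If k < m, then Q is not an integral polytope; i.e., Q ≠ conv(Q ∩ ℤ^{2m}). -/
open Matrix Set

/-- A point of `ℝᵐ × ℝᵐ` is integral if all its coordinates are integers. -/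
def IsIntegerPair {m : ℕ} (p : (Fin m → ℝ) × (Fin m → ℝ)) : Prop :=
  (∀ i, ∃ z : ℤ, p.1 i = (z : ℝ)) ∧ (∀ i, ∃ z : ℤ, p.2 i = (z : ℝ))

open Filter Topology in
/-- A finite form of for all small positive e. -/
lemma knap_small {m : ℕ} (c d : Fin m → ℝ) (B : ℝ) (hd : ∀ i, 0 < d i) :
    ∃ e : ℝ, 0 < e ∧ (∀ i, |e * c i| ≤ d i) ∧ e * B ≤ 1 := by
  have h1 : ∀ i, ∀ᶠ e : ℝ in 𝓝[>] 0, |e * c i| ≤ d i := by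
    intro i
    have : Tendsto (fun e : ℝ => |e * c i|) (𝓝 0) (𝓝 |0 * c i|) :=
      (by fun_prop : Continuous (fun e : ℝ => |e * c i|)).tendsto 0
    simp only [zero_mul, abs_zero] at this
    exact ((this.eventually (gt_mem_nhds (hd i))).mono (fun _ h => le_of_lt h)).filter_mono
      nhdsWithin_le_nhds
  have h2 : ∀ᶠ e : ℝ in 𝓝[>] 0, e * B ≤ 1 := by
    have : Tendsto (fun e : ℝ => e * B) (𝓝 0) (𝓝 (0 * B)) :=
      (by fun_prop : Continuous (fun e : ℝ => e * B)).tendsto 0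
    simp only [zero_mul] at this
    exact ((this.eventually (gt_mem_nhds one_pos)).mono (fun _ h => le_of_lt h)).filter_mono
      nhdsWithin_le_nhds
  have h3 : ∀ᶠ e : ℝ in 𝓝[>] 0, 0 < e := eventually_mem_nhdsWithin
  obtain ⟨e, he⟩ := (h3.and ((eventually_all.2 h1).and h2)).exists
  exact ⟨e, he⟩

lemma knap_geom (m j : ℕ) (hj : j ≤ m) :
    ∑ i : Fin m, (if j ≤ (i : ℕ) then (2 : ℝ) ^ (i : ℕ) else 0) = 2 ^ m - 2 ^ j := by
  induction m, hj using Nat.le_induction with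
  | base =>
    rw [sub_self]
    apply Finset.sum_eq_zero
    intro i _
    rw [if_neg (by omega)]
  | succ n hn ih =>
    rw [Fin.sum_univ_castSucc]
    simp only [Fin.val_castSucc, Fin.val_last, if_pos hn]
    rw [ih]; ring

/-- Chvatal-Gomory type inequality valid for integer points. -/
lemma knap_valid (m : ℕ) (j : Fin m) (x y : Fin m → ℝ)
    (hx : ∀ i, 0 ≤ x i) (hy : ∀ i, 0 ≤ y i)
    (hk : ∑ i : Fin m, (2 : ℝ) ^ ((i : ℕ) + 1) * (x i + y i) ≤ 2 ^ (m + 1) - 1)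
    (hxz : ∀ i, ∃ z : ℤ, x i = (z : ℝ)) (hyz : ∀ i, ∃ z : ℤ, y i = (z : ℝ)) :
    ∑ i : Fin m, (if (j : ℕ) ≤ (i : ℕ) then (2 : ℝ) ^ (i : ℕ) else 0) * (x i + y i)
      ≤ 2 ^ m - 2 ^ (j : ℕ) := by
  choose u hu using hxz
  choose v hv using hyz
  set N : ℤ := ∑ i : Fin m, (if (j : ℕ) ≤ (i : ℕ) then (2 : ℤ) ^ ((i : ℕ) - j) else 0) * (u i + v i)
    with hN
  have hS : ∑ i : Fin m, (if (j : ℕ) ≤ (i : ℕ) then (2 : ℝ) ^ (i : ℕ) else 0) * (x i + y i)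
      = 2 ^ (j : ℕ) * (N : ℝ) := by
    rw [hN]; push_cast
    rw [Finset.mul_sum]
    apply Finset.sum_congr rfl
    intro i _
    rw [hu, hv]
    split_ifs with h
    · rw [← mul_assoc, ← pow_add, Nat.add_sub_cancel' h]
    · simp
  have hle : 2 * ∑ i : Fin m, (if (j : ℕ) ≤ (i : ℕ) then (2 : ℝ) ^ (i : ℕ) else 0) * (x i + y i)
      ≤ 2 ^ (m + 1) - 1 := by
    refine le_trans ?_ hk
    rw [Finset.mul_sum]
    apply Finset.sum_le_sum
    intro i _
    have := hx i
    have := hy i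
    split_ifs with h
    · rw [pow_succ]; apply le_of_eq; ring
    · simp; positivity
  rw [hS] at hle ⊢
  have hm : (2 : ℝ) ^ m = 2 ^ (j : ℕ) * 2 ^ (m - (j : ℕ)) := by
    rw [← pow_add, Nat.add_sub_cancel' j.2.le]
  have hp : (0 : ℝ) < 2 ^ (j : ℕ) := by positivity
  have hlt : (N : ℝ) < 2 ^ (m - (j : ℕ)) := by
    rw [pow_succ] at hle
    refine lt_of_mul_lt_mul_left ?_ hp.le
    rw [← hm]; linarith
  have hlt' : N < 2 ^ (m - (j : ℕ)) := by exact_mod_cast hlt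
  have hle' : N ≤ 2 ^ (m - (j : ℕ)) - 1 := by omega
  have hle'' : (N : ℝ) ≤ 2 ^ (m - (j : ℕ)) - 1 := by exact_mod_cast hle'
  rw [hm]
  nlinarith

/-- The linear algebra part: directions. -/
lemma knap_dirs (m k : ℕ) (A B : Fin k → Fin m → ℝ) (hkm : k < m) :
    ∃ (a w v : Fin m → ℝ),
      (∀ j, ∑ i, A j i * a i - ∑ i, B j i * a i = 0) ∧
      (∀ j, ∑ i, A j i * w i + ∑ i, B j i * v i = 0) ∧
      (∀ i, a i ≠ 0 → w i = 0) ∧ (∀ i, a i = 0 → w i + v i = 0) ∧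
      ∃ i, a i ≠ 0 ∧ v i ≠ 0 := by
  classical
  let T : Set ℕ := {n | ∃ a : Fin m → ℝ,
    (∀ j, ∑ i, A j i * a i - ∑ i, B j i * a i = 0) ∧ (Finset.univ.filter (fun i => a i ≠ 0)).card = n}
  have hT0 : T.Nonempty := ⟨0, 0, by simp, by simp⟩
  have hTb : BddAbove T := by
    refine ⟨m, ?_⟩
    rintro n ⟨a, -, rfl⟩
    exact (Finset.card_le_univ _).trans (by simp)
  obtain ⟨a, ha, hcard⟩ := Nat.sSup_mem hT0 hTb
  let φ : ((Fin m → ℝ) × (Fin m → ℝ)) →ₗ[ℝ] ((Fin k → ℝ) × (Fin m → ℝ)) :=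
    { toFun := fun p => (fun j => ∑ i, A j i * p.1 i + ∑ i, B j i * p.2 i,
        fun i => if a i = 0 then p.1 i + p.2 i else p.1 i)
      map_add' := by
        intro p q
        ext j
        · simp [mul_add, Finset.sum_add_distrib]; ring
        · simp only [Prod.fst_add, Prod.snd_add, Pi.add_apply]; split_ifs <;> ring
      map_smul' := by
        intro c p
        ext j
        · simp [Finset.mul_sum, mul_add, mul_left_comm]
        · simp only [Prod.smul_fst, Prod.smul_snd, Pi.smul_apply, smul_eq_mul, RingHom.id_apply]
          split_ifs <;> ring }
  have hker : LinearMap.ker φ ≠ ⊥ := by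
    apply LinearMap.ker_ne_bot_of_finrank_lt
    simp; omega
  obtain ⟨⟨w, v⟩, hwv, hne⟩ := (Submodule.ne_bot_iff _).1 hker
  rw [LinearMap.mem_ker] at hwv
  have h1 : ∀ j, ∑ i, A j i * w i + ∑ i, B j i * v i = 0 :=
    fun j => congrFun (congrArg Prod.fst hwv) j
  have h2 : ∀ i, (if a i = 0 then w i + v i else w i) = 0 :=
    fun i => congrFun (congrArg Prod.snd hwv) i
  have h3 : ∀ i, a i ≠ 0 → w i = 0 := fun i hi => by simpa [hi] using h2 i
  have h4 : ∀ i, a i = 0 → w i + v i = 0 := fun i hi => by simpa [hi] using h2 i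
  refine ⟨a, w, v, ha, h1, h3, h4, ?_⟩
  by_contra hcon
  push Not at hcon
  have hv : ∀ i, v i = - w i := by
    intro i
    by_cases hi : a i = 0
    · linarith [h4 i hi]
    · rw [hcon i hi, h3 i hi, neg_zero]
  have hw : ∃ i, w i ≠ 0 := by
    by_contra hw
    push Not at hw
    apply hne
    ext i
    · simp [hw]
    · simp [hv, hw]
  obtain ⟨i0, hi0⟩ := hw
  have hai0 : a i0 = 0 := by
    by_contra h
    exact hi0 (h3 i0 h)
  have hmem : (Finset.univ.filter (fun i => (a + w) i ≠ 0)).card ∈ T := by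
    refine ⟨a + w, ?_, rfl⟩
    intro j
    have e1 := ha j
    have e2 := h1 j
    simp only [hv, mul_neg, Finset.sum_neg_distrib] at e2
    simp only [Pi.add_apply, mul_add, Finset.sum_add_distrib]
    linarith
  have hlt : (Finset.univ.filter (fun i => a i ≠ 0)).card
      < (Finset.univ.filter (fun i => (a + w) i ≠ 0)).card := by
    apply Finset.card_lt_card
    rw [Finset.ssubset_iff_of_subset]
    · exact ⟨i0, by simp [hai0, hi0], by simp [hai0]⟩
    · intro i hi
      simp only [Finset.mem_filter, Finset.mem_univ, true_and] at hi
      simp [h3 i hi, hi]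
  have := le_csSup hTb hmem
  omega

/-- A point violating one of the valid inequalities. -/
lemma knap_point (m k : ℕ) (W W' : Matrix (Fin k) (Fin m) ℤ) (hkm : k < m) :
    ∃ (x y : Fin m → ℝ) (j : Fin m),
      (∀ i, 0 ≤ x i ∧ x i ≤ 1) ∧ (∀ i, 0 ≤ y i ∧ y i ≤ 1) ∧
      ∑ i : Fin m, (2 : ℝ) ^ ((i : ℕ) + 1) * (x i + y i) ≤ 2 ^ (m + 1) - 1 ∧
      (∀ j : Fin k, ∃ z : ℤ,
          (∑ i, (W j i : ℝ) * x i) + (∑ i, (W' j i : ℝ) * y i) = (z : ℝ)) ∧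
      2 ^ m - 2 ^ (j : ℕ) <
        ∑ i : Fin m, (if (j : ℕ) ≤ (i : ℕ) then (2 : ℝ) ^ (i : ℕ) else 0) * (x i + y i) := by
  classical
  obtain ⟨a, w, v, ha, hwv, h3, h4, i0, hi0⟩ :=
    knap_dirs m k (fun j i => (W j i : ℝ)) (fun j i => (W' j i : ℝ)) hkm
  obtain ⟨j, hj, hjmax⟩ := (Finset.univ.filter (fun i => a i ≠ 0 ∧ v i ≠ 0)).exists_max_image
    (fun i => i) ⟨i0, by simpa using hi0⟩
  simp only [Finset.mem_filter, Finset.mem_univ, true_and] at hj hjmax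
  wlog hpos : 0 < v j generalizing w v with H
  · refine H (-w) (-v) ?_ ?_ ?_ ?_ ?_ ?_ ?_
    · intro j
      have := hwv j
      simp only [Pi.neg_apply, mul_neg, Finset.sum_neg_distrib]
      linarith
    · intro i hi; simp [h3 i hi]
    · intro i hi
      have := h4 i hi
      simp only [Pi.neg_apply]; linarith
    · simpa using hi0
    · simpa using hj
    · simpa using hjmax
    · have := lt_of_le_of_ne (not_lt.1 hpos) hj.2
      simpa using this
  obtain ⟨c, hc, hca, -⟩ := knap_small a (fun _ => 1 / 2) 0 (fun _ => by norm_num)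
  set s : Fin m → ℝ := fun i => w i + v i with hs
  obtain ⟨e, he, hev, heB⟩ := knap_small (fun i => |w i| + |v i|)
    (fun i => if a i = 0 then 1 else |c * a i|)
    (∑ i : Fin m, (2 : ℝ) ^ ((i : ℕ) + 1) * s i)
    (by
      intro i
      split_ifs with h
      · exact one_pos
      · exact abs_pos.2 (mul_ne_zero hc.ne' h))
  let b : Fin m → ℤ := fun i => if 0 < a i ∨ (a i = 0 ∧ 0 ≤ w i) then 0 else 1
  have hsum : ∀ i, ((b i : ℝ) + c * a i + e * w i) + (1 - (b i : ℝ) - c * a i + e * v i)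
      = 1 + e * s i := by
    intro i; simp only [hs]; ring
  have hbox : ∀ i, (0 ≤ (b i : ℝ) + c * a i + e * w i ∧ (b i : ℝ) + c * a i + e * w i ≤ 1) ∧
      (0 ≤ 1 - (b i : ℝ) - c * a i + e * v i ∧ 1 - (b i : ℝ) - c * a i + e * v i ≤ 1) := by
    intro i
    have hi1 := hev i
    have hi2 := hca i
    have hnn : 0 ≤ |w i| + |v i| := by positivity
    rw [abs_of_nonneg (mul_nonneg he.le hnn)] at hi1
    have hw1 := mul_le_mul_of_nonneg_left (le_abs_self (w i)) he.le
    have hw2 := mul_le_mul_of_nonneg_left (neg_abs_le (w i)) he.le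
    have hv1 := mul_le_mul_of_nonneg_left (le_abs_self (v i)) he.le
    have hv2 := mul_le_mul_of_nonneg_left (neg_abs_le (v i)) he.le
    have hw0 := mul_nonneg he.le (abs_nonneg (w i))
    have hv0 := mul_nonneg he.le (abs_nonneg (v i))
    rcases lt_trichotomy (a i) 0 with h | h | h
    · have hb : b i = 1 := by
        simp only [b]; rw [if_neg]; rintro (h' | ⟨h', -⟩) <;> linarith
      have hw := h3 i h.ne
      have hcn : c * a i < 0 := mul_neg_of_pos_of_neg hc h
      rw [if_neg h.ne, abs_of_neg hcn] at hi1
      rw [abs_of_neg hcn] at hi2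
      rw [hb, hw]
      rw [hw] at hi1
      simp only [abs_zero, zero_add] at hi1
      push_cast
      refine ⟨⟨?_, ?_⟩, ?_, ?_⟩ <;> linarith
    · have hv : v i = - w i := by linarith [h4 i h]
      rw [if_pos h, hv, abs_neg] at hi1
      by_cases hwi : 0 ≤ w i
      · have hb : b i = 0 := by simp only [b]; rw [if_pos (Or.inr ⟨h, hwi⟩)]
        have := mul_nonneg he.le hwi
        rw [hb, hv, h]
        push_cast
        refine ⟨⟨?_, ?_⟩, ?_, ?_⟩ <;> linarith
      · have hb : b i = 1 := by
          simp only [b]; rw [if_neg]; rintro (h' | ⟨-, h'⟩)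
          · linarith
          · exact hwi h'
        have := mul_neg_of_pos_of_neg he (not_le.1 hwi)
        rw [hb, hv, h]
        push_cast
        refine ⟨⟨?_, ?_⟩, ?_, ?_⟩ <;> linarith
    · have hb : b i = 0 := by simp only [b]; rw [if_pos (Or.inl h)]
      have hw := h3 i h.ne'
      have hcn : 0 < c * a i := mul_pos hc h
      rw [if_neg h.ne', abs_of_pos hcn] at hi1
      rw [abs_of_pos hcn] at hi2
      rw [hb, hw]
      rw [hw] at hi1
      simp only [abs_zero, zero_add] at hi1
      push_cast
      refine ⟨⟨?_, ?_⟩, ?_, ?_⟩ <;> linarith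
  refine ⟨fun i => (b i : ℝ) + c * a i + e * w i, fun i => 1 - (b i : ℝ) - c * a i + e * v i, j,
    fun i => (hbox i).1, fun i => (hbox i).2, ?_, ?_, ?_⟩
  · simp only [hsum]
    have hg := knap_geom m 0 (Nat.zero_le _)
    simp only [Nat.zero_le, if_true, pow_zero] at hg
    have : ∑ i : Fin m, (2 : ℝ) ^ ((i : ℕ) + 1) * (1 + e * s i)
        = 2 * ∑ i : Fin m, (2 : ℝ) ^ (i : ℕ) + e * ∑ i : Fin m, (2 : ℝ) ^ ((i : ℕ) + 1) * s i := by
      rw [Finset.mul_sum, Finset.mul_sum, ← Finset.sum_add_distrib]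
      apply Finset.sum_congr rfl
      intro i _
      ring
    rw [this, hg, pow_succ]
    linarith
  · intro r
    refine ⟨∑ i, W r i * b i + ∑ i, W' r i * (1 - b i), ?_⟩
    push_cast
    have e1 := ha r
    have e2 := hwv r
    have : (∑ i, (W r i : ℝ) * ((b i : ℝ) + c * a i + e * w i)) +
        (∑ i, (W' r i : ℝ) * (1 - (b i : ℝ) - c * a i + e * v i))
        = (∑ i, (W r i : ℝ) * (b i : ℝ) + ∑ i, (W' r i : ℝ) * (1 - (b i : ℝ)))
          + c * (∑ i, (W r i : ℝ) * a i - ∑ i, (W' r i : ℝ) * a i)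
          + e * (∑ i, (W r i : ℝ) * w i + ∑ i, (W' r i : ℝ) * v i) := by
      simp only [Finset.mul_sum, ← Finset.sum_add_distrib, ← Finset.sum_sub_distrib]
      apply Finset.sum_congr rfl
      intro i _
      ring
    rw [this, e1, e2]
    ring
  · simp only [hsum]
    have hg := knap_geom m j j.2.le
    have : ∑ i : Fin m, (if (j : ℕ) ≤ (i : ℕ) then (2 : ℝ) ^ (i : ℕ) else 0) * (1 + e * s i)
        = (2 ^ m - 2 ^ (j : ℕ)) + e * (2 ^ (j : ℕ) * v j) := by
      rw [← hg]
      have h5 : (2 : ℝ) ^ (j : ℕ) * v j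
          = ∑ i : Fin m, (if (j : ℕ) ≤ (i : ℕ) then (2 : ℝ) ^ (i : ℕ) else 0) * s i := by
        rw [Finset.sum_eq_single j]
        · simp [hs, h3 j hj.1]
        · intro i _ hij
          by_cases hle : (j : ℕ) ≤ (i : ℕ)
          · have hsi : s i = 0 := by
              simp only [hs]
              by_cases hai : a i = 0
              · exact h4 i hai
              · rw [h3 i hai, zero_add]
                by_contra hvi
                exact hij (le_antisymm (hjmax i ⟨hai, hvi⟩) hle)
            rw [hsi, mul_zero]
          · rw [if_neg hle, zero_mul]
        · simp
      rw [h5, Finset.mul_sum, ← Finset.sum_add_distrib]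
      apply Finset.sum_congr rfl
      intro i _
      ring
    rw [this]
    have : 0 < e * (2 ^ (j : ℕ) * v j) := by positivity
    linarith

lemma knap_convex_le (m : ℕ) (f : Fin m → ℝ) (r : ℝ) :
    Convex ℝ {p : (Fin m → ℝ) × (Fin m → ℝ) | ∑ i, f i * (p.1 i + p.2 i) ≤ r} := by
  intro p hp q hq α β hα hβ hαβ
  simp only [Set.mem_ofPred_eq] at hp hq ⊢
  have : ∑ i, f i * ((α • p + β • q).1 i + (α • p + β • q).2 i)
      = α * ∑ i, f i * (p.1 i + p.2 i) + β * ∑ i, f i * (q.1 i + q.2 i) := by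
    simp only [Finset.mul_sum, ← Finset.sum_add_distrib]
    apply Finset.sum_congr rfl
    intro i _
    simp
    ring
  rw [this]
  calc _ ≤ α * r + β * r := by gcongr
    _ = r := by rw [← add_mul, hαβ, one_mul]

/-- **Lower bound: at least `m` integrality constraints are needed for the knapsack
polytope** `P = {(x,y) ∈ [0,1]^{2m} : ∑ᵢ 2ⁱ(xᵢ+yᵢ) ≤ 2^{m+1} - 1}`. For any integral
`W, W' ∈ ℤ^{k×m}` with `k < m`, the set `Q = conv {(x,y) ∈ P : Wx + W'y ∈ ℤᵏ}` is not
an integral polytope. -/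
theorem knapsack_lower_bound_on_integrality_constraints
    (m k : ℕ) (W W' : Matrix (Fin k) (Fin m) ℤ) (hkm : k < m) :
    convexHull ℝ {p : (Fin m → ℝ) × (Fin m → ℝ) |
        ((∀ i, 0 ≤ p.1 i ∧ p.1 i ≤ 1) ∧ (∀ i, 0 ≤ p.2 i ∧ p.2 i ≤ 1) ∧
          ∑ i : Fin m, (2 : ℝ) ^ ((i : ℕ) + 1) * (p.1 i + p.2 i)
            ≤ 2 ^ (m + 1) - 1) ∧
        (∀ j : Fin k, ∃ z : ℤ,
          (∑ i, (W j i : ℝ) * p.1 i) + (∑ i, (W' j i : ℝ) * p.2 i) = (z : ℝ))}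
      ≠ convexHull ℝ ((convexHull ℝ {p : (Fin m → ℝ) × (Fin m → ℝ) |
        ((∀ i, 0 ≤ p.1 i ∧ p.1 i ≤ 1) ∧ (∀ i, 0 ≤ p.2 i ∧ p.2 i ≤ 1) ∧
          ∑ i : Fin m, (2 : ℝ) ^ ((i : ℕ) + 1) * (p.1 i + p.2 i)
            ≤ 2 ^ (m + 1) - 1) ∧
        (∀ j : Fin k, ∃ z : ℤ,
          (∑ i, (W j i : ℝ) * p.1 i) + (∑ i, (W' j i : ℝ) * p.2 i) = (z : ℝ))})
        ∩ {p | IsIntegerPair p}) := by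
  intro heq
  obtain ⟨x, y, j, hx, hy, hk, hz, hviol⟩ := knap_point m k W W' hkm
  have hmem := subset_convexHull ℝ {p : (Fin m → ℝ) × (Fin m → ℝ) |
        ((∀ i, 0 ≤ p.1 i ∧ p.1 i ≤ 1) ∧ (∀ i, 0 ≤ p.2 i ∧ p.2 i ≤ 1) ∧
          ∑ i : Fin m, (2 : ℝ) ^ ((i : ℕ) + 1) * (p.1 i + p.2 i)
            ≤ 2 ^ (m + 1) - 1) ∧
        (∀ j : Fin k, ∃ z : ℤ,
          (∑ i, (W j i : ℝ) * p.1 i) + (∑ i, (W' j i : ℝ) * p.2 i) = (z : ℝ))}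
    (show (x, y) ∈ _ from ⟨⟨hx, hy, hk⟩, hz⟩)
  rw [heq] at hmem
  have hsub := convexHull_min (𝕜 := ℝ) ?_ (knap_convex_le m
    (fun i => if (j : ℕ) ≤ (i : ℕ) then (2 : ℝ) ^ (i : ℕ) else 0) (2 ^ m - 2 ^ (j : ℕ))) hmem
  · exact absurd hsub (not_le.2 hviol)
  · rintro p ⟨hp, hpz⟩
    have hpos : Convex ℝ {p : (Fin m → ℝ) × (Fin m → ℝ) | 0 ≤ p} := convex_Ici 0
    have hp1 : 0 ≤ p := by
      refine convexHull_min (𝕜 := ℝ) ?_ hpos hp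
      rintro q ⟨⟨h1, h2, -⟩, -⟩
      exact ⟨fun i => (h1 i).1, fun i => (h2 i).1⟩
    have hp2 := convexHull_min (𝕜 := ℝ) (fun q hq => hq.1.2.2)
      (knap_convex_le m (fun i => (2 : ℝ) ^ ((i : ℕ) + 1)) (2 ^ (m + 1) - 1)) hp
    exact knap_valid m j p.1 p.2 (fun i => hp1.1 i) (fun i => hp1.2 i) hp2 hpz.1 hpz.2
end

section
/- Let n ≥ 4, a ∈ ℤ^n, b ∈ ℤ, and P = {x ∈ [0,1]^n : a^T x ≤ b}. Then there exists an integer matrix W ∈ ℤ^{(n−2)×n} such that conv(P ∩ ℤ^n) = conv({x ∈ P : Wx ∈ ℤ^{n−2}}). That is, every 0-1 knapsack polytope can be modeled, using only the original knapsack inequality and the 0-1 variable bounds, with at most n−2 integrality constraints. -/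
open Matrix Set

/-- A point of `ℝⁿ` is integral if all its coordinates are integers. -/
def IsIntegerPoint {n : ℕ} (x : Fin n → ℝ) : Prop := ∀ i, ∃ z : ℤ, x i = (z : ℝ)

theorem tight_step {J E : Type*} [Fintype J] [AddCommGroup E] [Module ℝ E]
    [FiniteDimensional ℝ E] (g : J → E →ₗ[ℝ] ℝ) (w : E) (h0 : ∀ j, 1 ≤ g j w)
    (hsp : ∀ v, (∀ j, g j v = 0) → v = 0)
    (hc : (Finset.univ.filter (fun j => g j w = 1)).card < Module.finrank ℝ E) :
    ∃ w', (∀ j, 1 ≤ g j w') ∧ (Finset.univ.filter (fun j => g j w = 1)).card <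
      (Finset.univ.filter (fun j => g j w' = 1)).card := by
  classical
  obtain ⟨v, hv0, hv⟩ : ∃ v : E, v ≠ 0 ∧ ∀ j, g j w = 1 → g j v = 0 := by
    let f : E →ₗ[ℝ] ({j // g j w = 1} → ℝ) := LinearMap.pi (fun j => g j.1)
    have hlt : Module.finrank ℝ ({j // g j w = 1} → ℝ) < Module.finrank ℝ E := by
      rw [Module.finrank_fintype_fun_eq_card, Fintype.card_subtype]; exact hc
    have hk := LinearMap.ker_ne_bot_of_finrank_lt (f := f) hlt
    obtain ⟨v, hv, hv0⟩ := (Submodule.ne_bot_iff _).1 hk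
    refine ⟨v, hv0, fun j hj => ?_⟩
    have := congrFun (LinearMap.mem_ker.1 hv) ⟨j, hj⟩
    simpa [f] using this
  obtain ⟨v, hv, j1, hj1⟩ : ∃ v : E, (∀ j, g j w = 1 → g j v = 0) ∧ ∃ j, g j v < 0 := by
    have : ∃ j, g j v ≠ 0 := by
      by_contra! h
      exact hv0 (hsp v h)
    obtain ⟨j, hj⟩ := this
    rcases lt_or_gt_of_ne hj with h | h
    · exact ⟨v, hv, j, h⟩
    · exact ⟨-v, fun j hj => by simp [hv j hj], j, by simpa using h⟩
  obtain ⟨j0, hj0, hmin⟩ := Finset.exists_min_image (Finset.univ.filter (fun j => g j v < 0))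
    (fun j => (g j w - 1) / (-(g j v))) ⟨j1, by simpa using hj1⟩
  have hj0 : g j0 v < 0 := by simpa using hj0
  set τ := (g j0 w - 1) / (-(g j0 v)) with hτ
  have hτ0 : 0 ≤ τ := div_nonneg (by linarith [h0 j0]) (by linarith)
  refine ⟨w + τ • v, fun j => ?_, Finset.card_lt_card ?_⟩
  · simp only [map_add, map_smul, smul_eq_mul]
    rcases lt_or_ge (g j v) 0 with h | h
    · have h1 := hmin j (by simpa using h)
      rw [le_div_iff₀ (by linarith)] at h1
      linarith
    · have := mul_nonneg hτ0 h
      linarith [h0 j]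
  · rw [Finset.ssubset_iff_of_subset]
    · refine ⟨j0, ?_, ?_⟩
      · have : τ * (-(g j0 v)) = g j0 w - 1 := by
          rw [hτ]; exact div_mul_cancel₀ _ (by linarith)
        simp; linarith
      · simp only [Finset.mem_filter, Finset.mem_univ, true_and]
        intro h
        have := hv j0 h
        linarith
    · intro j hj
      have hj : g j w = 1 := by simpa using hj
      simp [hj, hv j hj]

theorem exists_tight {J E : Type*} [Fintype J] [AddCommGroup E] [Module ℝ E]
    [FiniteDimensional ℝ E] (g : J → E →ₗ[ℝ] ℝ) (w0 : E) (h0 : ∀ j, 1 ≤ g j w0)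
    (hsp : ∀ v, (∀ j, g j v = 0) → v = 0) :
    ∃ w, (∀ j, 1 ≤ g j w) ∧
      Module.finrank ℝ E ≤ (Finset.univ.filter (fun j => g j w = 1)).card := by
  by_contra! hcon
  have : ∀ k : ℕ, ∃ w, (∀ j, 1 ≤ g j w) ∧
      k ≤ (Finset.univ.filter (fun j => g j w = 1)).card := by
    intro k
    induction k with
    | zero => exact ⟨w0, h0, Nat.zero_le _⟩
    | succ k ih =>
      obtain ⟨w, hw, hk⟩ := ih
      obtain ⟨w', hw', hk'⟩ := tight_step g w hw hsp (hcon w hw)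
      exact ⟨w', hw', by omega⟩
  obtain ⟨w, hw, hk⟩ := this (Module.finrank ℝ E)
  exact absurd (hcon w hw) (by omega)

/-- real value of a bit -/
def bitR (p : Bool) : ℝ := if p then 1 else 0

/-- integer value of a bit -/
def bitZ (p : Bool) : ℤ := if p then 1 else 0

theorem bitR_eq (p : Bool) : bitR p = (bitZ p : ℝ) := by cases p <;> simp [bitR, bitZ]

/-- Some separating functional is constant on three distinct vertices of the cube. -/
theorem exists_three (n : ℕ) (hn : 4 ≤ n) (a : Fin n → ℤ) (b : ℤ) :
    ∃ (c : Fin n → ℝ) (β : ℝ) (p q r : Fin n → Bool), p ≠ q ∧ p ≠ r ∧ q ≠ r ∧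
      (∀ x : Fin n → Bool, ∑ i, a i * bitZ (x i) ≤ b → ∑ i, c i * bitR (x i) < β) ∧
      (∀ x : Fin n → Bool, b < ∑ i, a i * bitZ (x i) → β < ∑ i, c i * bitR (x i)) ∧
      ∑ i, c i * bitR (p i) = ∑ i, c i * bitR (q i) ∧
      ∑ i, c i * bitR (p i) = ∑ i, c i * bitR (r i) := by
  classical
  let e : (Fin n → Bool) → ((Fin n → ℝ) × ℝ) →ₗ[ℝ] ℝ := fun x =>
    { toFun := fun w => w.2 - ∑ i, w.1 i * bitR (x i)
      map_add' := by
        intro u v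
        simp only [Prod.snd_add, Prod.fst_add, Pi.add_apply, add_mul, Finset.sum_add_distrib]
        ring
      map_smul' := by
        intro t u
        simp only [Prod.smul_snd, Prod.smul_fst, Pi.smul_apply, smul_eq_mul, RingHom.id_apply,
          mul_assoc, ← Finset.mul_sum]
        ring }
  have he : ∀ x w, e x w = w.2 - ∑ i, w.1 i * bitR (x i) := fun _ _ => rfl
  let g : (Fin n → Bool) → ((Fin n → ℝ) × ℝ) →ₗ[ℝ] ℝ := fun x =>
    if ∑ i, a i * bitZ (x i) ≤ b then e x else - e x
  have hg1 : ∀ x w, ∑ i, a i * bitZ (x i) ≤ b → g x w = w.2 - ∑ i, w.1 i * bitR (x i) := by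
    intro x w h; simp only [g, if_pos h, he]
  have hg2 : ∀ x w, ¬ ∑ i, a i * bitZ (x i) ≤ b →
      g x w = - (w.2 - ∑ i, w.1 i * bitR (x i)) := by
    intro x w h; simp only [g, if_neg h, LinearMap.neg_apply, he]
  have hge : ∀ x w, g x w = 0 → w.2 - ∑ i, w.1 i * bitR (x i) = 0 := by
    intro x w h
    by_cases hx : ∑ i, a i * bitZ (x i) ≤ b
    · rwa [hg1 x w hx] at h
    · rw [hg2 x w hx] at h; linarith
  obtain ⟨w, hw, hcard⟩ := exists_tight g ((fun i => 2 * (a i : ℝ)), 2 * (b : ℝ) + 1)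
    (by
      intro x
      have hs : ∑ i, 2 * (a i : ℝ) * bitR (x i) = 2 * ((∑ i, a i * bitZ (x i) : ℤ) : ℝ) := by
        push_cast
        rw [Finset.mul_sum]
        exact Finset.sum_congr rfl fun i _ => by rw [bitR_eq]; ring
      by_cases hx : ∑ i, a i * bitZ (x i) ≤ b
      · rw [hg1 _ _ hx]
        simp only [hs]
        have : ((∑ i, a i * bitZ (x i) : ℤ) : ℝ) ≤ b := by exact_mod_cast hx
        linarith
      · rw [hg2 _ _ hx]
        simp only [hs]
        have : (b : ℝ) + 1 ≤ ((∑ i, a i * bitZ (x i) : ℤ) : ℝ) := by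
          exact_mod_cast (not_le.1 hx)
        linarith)
    (by
      intro v hv
      have h0 : v.2 = 0 := by
        have := hge _ _ (hv (fun _ => false))
        simpa [bitR] using this
      have h1 : ∀ i, v.1 i = 0 := by
        intro i
        have := hge _ _ (hv (fun k => decide (k = i)))
        simpa [bitR, h0] using this
      exact Prod.ext (funext h1) h0)
  have hfr : Module.finrank ℝ ((Fin n → ℝ) × ℝ) = n + 1 := by simp
  rw [hfr] at hcard
  set T := Finset.univ.filter (fun x => g x w = 1) with hT
  have hsplit := Finset.card_filter_add_card_filter_not (s := T)
    (fun x => ∑ i, a i * bitZ (x i) ≤ b)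
  have key : ∃ p q r : Fin n → Bool, p ≠ q ∧ p ≠ r ∧ q ≠ r ∧
      ∑ i, w.1 i * bitR (p i) = ∑ i, w.1 i * bitR (q i) ∧
      ∑ i, w.1 i * bitR (p i) = ∑ i, w.1 i * bitR (r i) := by
    by_cases hbig : 2 < (T.filter (fun x => ∑ i, a i * bitZ (x i) ≤ b)).card
    · obtain ⟨p, hp, q, hq, r, hr, h1, h2, h3⟩ := Finset.two_lt_card.1 hbig
      simp only [hT, Finset.mem_filter, Finset.mem_univ, true_and] at hp hq hr
      have ep := hp.1; have eq := hq.1; have er := hr.1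
      rw [hg1 _ _ hp.2] at ep; rw [hg1 _ _ hq.2] at eq; rw [hg1 _ _ hr.2] at er
      exact ⟨p, q, r, h1, h2, h3, by linarith, by linarith⟩
    · have hbig : 2 < (T.filter (fun x => ¬ ∑ i, a i * bitZ (x i) ≤ b)).card := by omega
      obtain ⟨p, hp, q, hq, r, hr, h1, h2, h3⟩ := Finset.two_lt_card.1 hbig
      simp only [hT, Finset.mem_filter, Finset.mem_univ, true_and] at hp hq hr
      have ep := hp.1; have eq := hq.1; have er := hr.1
      rw [hg2 _ _ hp.2] at ep; rw [hg2 _ _ hq.2] at eq; rw [hg2 _ _ hr.2] at er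
      exact ⟨p, q, r, h1, h2, h3, by linarith, by linarith⟩
  obtain ⟨p, q, r, h1, h2, h3, h4, h5⟩ := key
  refine ⟨w.1, w.2, p, q, r, h1, h2, h3, ?_, ?_, h4, h5⟩
  · intro x hx
    have := hw x
    rw [hg1 _ _ hx] at this; linarith
  · intro x hx
    have := hw x
    rw [hg2 _ _ (not_le.2 hx)] at this; linarith

/-- Relabelling three distinct points. -/
theorem relabel {n : ℕ} (c : Fin n → ℝ) (p q r : Fin n → Bool) (h1 : p ≠ q) (h2 : p ≠ r)
    (h3 : q ≠ r) (h4 : ∑ i, c i * bitR (p i) = ∑ i, c i * bitR (q i))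
    (h5 : ∑ i, c i * bitR (p i) = ∑ i, c i * bitR (r i)) :
    ∃ (x y z : Fin n → Bool) (t u : Fin n), x t = z t ∧ x t ≠ y t ∧ x u = y u ∧ x u ≠ z u ∧
      ∑ i, c i * bitR (x i) = ∑ i, c i * bitR (y i) ∧
      ∑ i, c i * bitR (x i) = ∑ i, c i * bitR (z i) := by
  -- if `p` is the odd one out at `i`
  have main : ∀ p q r : Fin n → Bool, q ≠ r →
      ∑ i, c i * bitR (p i) = ∑ i, c i * bitR (q i) →
      ∑ i, c i * bitR (p i) = ∑ i, c i * bitR (r i) → ∀ i, q i = r i → p i ≠ q i →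
      ∃ (x y z : Fin n → Bool) (t u : Fin n), x t = z t ∧ x t ≠ y t ∧ x u = y u ∧ x u ≠ z u ∧
      ∑ i, c i * bitR (x i) = ∑ i, c i * bitR (y i) ∧
      ∑ i, c i * bitR (x i) = ∑ i, c i * bitR (z i) := by
    intro p q r h3 h4 h5 i hi hpi
    obtain ⟨j, hj⟩ := Function.ne_iff.1 h3
    by_cases hpj : p j = q j
    · exact ⟨q, p, r, i, j, hi, hpi.symm, hpj.symm, hj, h4.symm, by linarith⟩
    · have hpr : r j = p j := by
        revert hj hpj; cases p j <;> cases q j <;> cases r j <;> simp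
      exact ⟨r, p, q, i, j, hi.symm, by rw [← hi]; exact hpi.symm, hpr, hj.symm, h5.symm,
        by linarith⟩
  obtain ⟨i, hi⟩ := Function.ne_iff.1 h1
  by_cases hq : q i = r i
  · exact main p q r h3 h4 h5 i hq hi
  · have hpr : p i = r i := by
      revert hi hq; cases p i <;> cases q i <;> cases r i <;> simp
    exact main q p r h2 h4.symm (by linarith) i hpr hi.symm

theorem three_mem {E : Type*} [AddCommGroup E] [Module ℝ E] {s : Set E} (hs : Convex ℝ s)
    (w : Fin 3 → ℝ) (v : Fin 3 → E) (h0 : ∀ i, 0 ≤ w i) (h1 : w 0 + w 1 + w 2 = 1)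
    (hv : ∀ i, 0 < w i → v i ∈ s) : w 0 • v 0 + w 1 • v 1 + w 2 • v 2 ∈ s := by
  classical
  have h := hs.sum_mem (t := Finset.univ.filter (fun i => 0 < w i)) (w := w) (z := v)
    (fun i _ => h0 i) ?_ (fun i hi => hv i (by simpa using hi))
  · rw [Finset.sum_filter_of_ne] at h
    · rwa [Fin.sum_univ_three] at h
    · intro i _ hi
      exact lt_of_le_of_ne (h0 i) fun h => hi (by rw [← h, zero_smul])
  · rw [Finset.sum_filter_of_ne, Fin.sum_univ_three, h1]
    intro i _ hi
    exact lt_of_le_of_ne (h0 i) (Ne.symm hi)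

/-- The slices of the cube are integral. -/
theorem slice_mem {n : ℕ} (c : Fin n → ℝ) (d d' : Fin n → ℤ)
    (hd : ∀ i, (d i = 0 ∧ d' i = 0) ∨ (d i = 1 ∧ d' i = 0) ∨ (d i = -1 ∧ d' i = 0) ∨
      (d i = 0 ∧ d' i = 1) ∨ (d i = 0 ∧ d' i = -1) ∨ (d i = 1 ∧ d' i = 1) ∨
      (d i = -1 ∧ d' i = -1))
    (hc : ∑ i, c i * (d i : ℝ) = 0) (hc' : ∑ i, c i * (d' i : ℝ) = 0)
    (x : Fin n → ℝ) (hx : ∀ i, 0 ≤ x i ∧ x i ≤ 1) (z : Fin n → ℤ) (l m : ℝ)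
    (hl0 : 0 ≤ l) (hl1 : l < 1) (hm0 : 0 ≤ m) (hm1 : m < 1)
    (hz : ∀ i, x i = z i + l * d i + m * d' i) :
    x ∈ convexHull ℝ {y : Fin n → ℝ | ∃ p : Fin n → Bool, y = (fun i => bitR (p i)) ∧
      ∑ i, c i * bitR (p i) = ∑ i, c i * x i} := by
  have vert : ∀ k k' : ℤ, (∀ i, |(z i + k * d i + k' * d' i : ℝ) - x i| < 1) →
      (fun i => (z i + k * d i + k' * d' i : ℝ)) ∈ convexHull ℝ
        {y : Fin n → ℝ | ∃ p : Fin n → Bool, y = (fun i => bitR (p i)) ∧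
      ∑ i, c i * bitR (p i) = ∑ i, c i * x i} := by
    intro k k' h
    apply subset_convexHull
    have hb : ∀ i, bitR (decide (z i + k * d i + k' * d' i = 1)) =
        (z i + k * d i + k' * d' i : ℝ) := by
      intro i
      have h1 := abs_lt.1 (h i)
      have h2 := hx i
      have h3 : (-1 : ℝ) < ((z i + k * d i + k' * d' i : ℤ) : ℝ) := by push_cast; linarith
      have h4 : ((z i + k * d i + k' * d' i : ℤ) : ℝ) < 2 := by push_cast; linarith
      have h3' : -1 < z i + k * d i + k' * d' i := by exact_mod_cast h3
      have h4' : z i + k * d i + k' * d' i < 2 := by exact_mod_cast h4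
      have h5 : z i + k * d i + k' * d' i = 0 ∨ z i + k * d i + k' * d' i = 1 := by omega
      have h6 : (z i + k * d i + k' * d' i : ℝ) = ((z i + k * d i + k' * d' i : ℤ) : ℝ) := by
        push_cast; rfl
      rw [h6]
      rcases h5 with h5 | h5 <;> rw [h5] <;> simp [bitR]
    refine ⟨fun i => decide (z i + k * d i + k' * d' i = 1), ?_, ?_⟩
    · funext i; exact (hb i).symm
    · simp only [hb, hz]
      have e1 : ∀ (s s' : ℝ), ∑ i, c i * (z i + s * d i + s' * d' i : ℝ) =
          ∑ i, c i * (z i : ℝ) := by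
        intro s s'
        have : ∀ i, c i * (z i + s * d i + s' * d' i : ℝ) =
          c i * z i + s * (c i * d i) + s' * (c i * d' i) := fun i => by ring
        simp only [this, Finset.sum_add_distrib, ← Finset.mul_sum, hc, hc']
        ring
      rw [e1, e1]
  rcases le_or_gt (l + m) 1 with hlm | hlm
  · have := three_mem (convex_convexHull ℝ {y : Fin n → ℝ | ∃ p : Fin n → Bool,
      y = (fun i => bitR (p i)) ∧ ∑ i, c i * bitR (p i) = ∑ i, c i * x i})
      ![1 - l - m, l, m]
      ![(fun i => (z i + (0 : ℤ) * d i + (0 : ℤ) * d' i : ℝ)),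
        (fun i => (z i + (1 : ℤ) * d i + (0 : ℤ) * d' i : ℝ)),
        (fun i => (z i + (0 : ℤ) * d i + (1 : ℤ) * d' i : ℝ))]
      (by intro i; fin_cases i <;> simp <;> linarith) (by simp; ring)
      (by
        intro i hi
        fin_cases i <;> simp at hi <;> refine vert _ _ fun i => ?_ <;> rw [hz i, abs_lt] <;>
          rcases hd i with h | h | h | h | h | h | h <;> rw [h.1, h.2] <;> push_cast <;>
          constructor <;> linarith)
    convert this using 1
    funext i
    simp [hz i]
    ring
  · have := three_mem (convex_convexHull ℝ {y : Fin n → ℝ | ∃ p : Fin n → Bool,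
      y = (fun i => bitR (p i)) ∧ ∑ i, c i * bitR (p i) = ∑ i, c i * x i})
      ![1 - m, 1 - l, l + m - 1]
      ![(fun i => (z i + (1 : ℤ) * d i + (0 : ℤ) * d' i : ℝ)),
        (fun i => (z i + (0 : ℤ) * d i + (1 : ℤ) * d' i : ℝ)),
        (fun i => (z i + (1 : ℤ) * d i + (1 : ℤ) * d' i : ℝ))]
      (by intro i; fin_cases i <;> simp <;> linarith) (by simp; ring)
      (by
        intro i hi
        fin_cases i <;> simp at hi <;> refine vert _ _ fun i => ?_ <;> rw [hz i, abs_lt] <;>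
          rcases hd i with h | h | h | h | h | h | h <;> rw [h.1, h.2] <;> push_cast <;>
          constructor <;> linarith)
    convert this using 1
    funext i
    simp [hz i]
    ring

/-- **Every 0-1 knapsack polytope can be modeled with at most `n - 2` integrality
constraints.** For `n ≥ 4`, `a ∈ ℤⁿ`, `b ∈ ℤ` and `P = {x ∈ [0,1]ⁿ : aᵀx ≤ b}`,
there is `W ∈ ℤ^{(n-2)×n}` with `conv(P ∩ ℤⁿ) = conv {x ∈ P : Wx ∈ ℤ^{n-2}}`. -/
theorem knapsack_upper_bound_n_minus_two_integrality_constraints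
    (n : ℕ) (hn : 4 ≤ n) (a : Fin n → ℤ) (b : ℤ) :
    ∃ W : Matrix (Fin (n - 2)) (Fin n) ℤ,
      convexHull ℝ {x : Fin n → ℝ |
          ((∀ i, 0 ≤ x i ∧ x i ≤ 1) ∧ ∑ i, (a i : ℝ) * x i ≤ (b : ℝ)) ∧
          IsIntegerPoint x}
        = convexHull ℝ {x : Fin n → ℝ |
          ((∀ i, 0 ≤ x i ∧ x i ≤ 1) ∧ ∑ i, (a i : ℝ) * x i ≤ (b : ℝ)) ∧
          (∀ j, ∃ z : ℤ, (W.map (Int.cast : ℤ → ℝ)).mulVec x j = (z : ℝ))} := by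
  classical
  obtain ⟨c, β, p, q, r, h1, h2, h3, hF, hI, h4, h5⟩ := exists_three n hn a b
  obtain ⟨p, q, r, t, u, ht1, ht2, hu1, hu2, hpq, hpr⟩ := relabel c p q r h1 h2 h3 h4 h5
  clear h1 h2 h3 h4 h5
  have htu : t ≠ u := by
    rintro rfl
    exact ht2 hu1
  set d : Fin n → ℤ := fun i => bitZ (p i) - bitZ (q i) with hd
  set d' : Fin n → ℤ := fun i => bitZ (p i) - bitZ (r i) with hd'
  have hdd : ∀ i, (d i = 0 ∧ d' i = 0) ∨ (d i = 1 ∧ d' i = 0) ∨ (d i = -1 ∧ d' i = 0) ∨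
      (d i = 0 ∧ d' i = 1) ∨ (d i = 0 ∧ d' i = -1) ∨ (d i = 1 ∧ d' i = 1) ∨
      (d i = -1 ∧ d' i = -1) := by
    intro i
    simp only [hd, hd']
    cases p i <;> cases q i <;> cases r i <;> simp [bitZ]
  have hdt : (d t : ℝ) * d t = 1 := by
    simp only [hd]
    revert ht2
    cases p t <;> cases q t <;> simp [bitZ]
  have hdu : (d u : ℝ) = 0 := by simp [hd, hu1]
  have hdt' : (d' t : ℝ) = 0 := by simp [hd', ht1]
  have hdu' : (d' u : ℝ) * d' u = 1 := by
    simp only [hd']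
    revert hu2
    cases p u <;> cases r u <;> simp [bitZ]
  have hc : ∑ i, c i * (d i : ℝ) = 0 := by
    simp only [hd, Int.cast_sub, ← bitR_eq, mul_sub, Finset.sum_sub_distrib]
    linarith
  have hc' : ∑ i, c i * (d' i : ℝ) = 0 := by
    simp only [hd', Int.cast_sub, ← bitR_eq, mul_sub, Finset.sum_sub_distrib]
    linarith
  have hcard : Fintype.card {i : Fin n // i ∉ ({t, u} : Finset (Fin n))} = n - 2 := by
    rw [Fintype.card_subtype_compl, Fintype.card_coe, Finset.card_pair htu, Fintype.card_fin]
  let e : Fin (n - 2) ≃ {i : Fin n // i ∉ ({t, u} : Finset (Fin n))} :=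
    (Fintype.equivFinOfCardEq hcard).symm
  let W : Matrix (Fin (n - 2)) (Fin n) ℤ := fun j k =>
    (if k = (e j).1 then 1 else 0) - d (e j).1 * d t * (if k = t then 1 else 0)
      - d' (e j).1 * d' u * (if k = u then 1 else 0)
  have hW : ∀ x : Fin n → ℝ, ∀ j, (W.map (Int.cast : ℤ → ℝ)).mulVec x j =
      x (e j).1 - d (e j).1 * d t * x t - d' (e j).1 * d' u * x u := by
    intro x j
    have hent : ∀ k, (W.map (Int.cast : ℤ → ℝ)) j k * x k =
        (if k = (e j).1 then x k else 0) - d (e j).1 * d t * (if k = t then x k else 0)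
          - d' (e j).1 * d' u * (if k = u then x k else 0) := by
      intro k
      rw [Matrix.map_apply]
      change (((if k = (e j).1 then 1 else 0) - d (e j).1 * d t * (if k = t then 1 else 0)
        - d' (e j).1 * d' u * (if k = u then 1 else 0) : ℤ) : ℝ) * x k = _
      push_cast
      split_ifs <;> ring
    change ∑ k, (W.map (Int.cast : ℤ → ℝ)) j k * x k = _
    simp only [hent, Finset.sum_sub_distrib, ← Finset.mul_sum, Finset.sum_ite_eq',
      Finset.mem_univ, Finset.sum_ite_eq, if_true]
  refine ⟨W, Set.Subset.antisymm (convexHull_mono ?_) (convexHull_min ?_ (convex_convexHull ℝ _))⟩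
  · rintro x ⟨hx, hxi⟩
    refine ⟨hx, fun j => ?_⟩
    choose z hz using hxi
    refine ⟨z (e j).1 - d (e j).1 * d t * z t - d' (e j).1 * d' u * z u, ?_⟩
    rw [hW, hz, hz, hz]
    push_cast
    ring
  · rintro x ⟨⟨hx, hxb⟩, hxW⟩
    have hint : ∀ i, ∃ z : ℤ, x i - (d t * x t) * d i - (d' u * x u) * d' i = z := by
      intro i
      by_cases hit : i = t
      · subst hit
        refine ⟨0, ?_⟩
        rw [hdt']
        push_cast
        linear_combination (-x i) * hdt
      · by_cases hiu : i = u
        · subst hiu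
          refine ⟨0, ?_⟩
          rw [hdu]
          push_cast
          linear_combination (-x i) * hdu'
        · obtain ⟨z, hz⟩ := hxW (e.symm ⟨i, by simp [hit, hiu]⟩)
          refine ⟨z, ?_⟩
          rw [← hz, hW]
          simp only [Equiv.apply_symm_apply]
          ring
    choose z hz using hint
    have hmem := slice_mem c d d' hdd hc hc' x hx
      (fun i => z i + ⌊(d t * x t : ℝ)⌋ * d i + ⌊(d' u * x u : ℝ)⌋ * d' i)
      (Int.fract (d t * x t : ℝ)) (Int.fract (d' u * x u : ℝ))
      (Int.fract_nonneg _) (Int.fract_lt_one _) (Int.fract_nonneg _) (Int.fract_lt_one _)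
      (by
        intro i
        push_cast
        rw [← hz i]
        unfold Int.fract
        ring)
    have hcast : ∀ s : Fin n → Bool, ∑ i, (a i : ℝ) * bitR (s i) =
        ((∑ i, a i * bitZ (s i) : ℤ) : ℝ) := by
      intro s
      push_cast
      simp only [bitR_eq]
    have hbit : ∀ s : Bool, 0 ≤ bitR s ∧ bitR s ≤ 1 := by
      intro s
      cases s <;> simp [bitR]
    rcases le_or_gt (∑ i, c i * x i) β with hβ | hβ
    · refine convexHull_mono ?_ hmem
      rintro y ⟨s, rfl, hs⟩
      refine ⟨⟨fun i => hbit (s i), ?_⟩, fun i => ⟨bitZ (s i), bitR_eq _⟩⟩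
      rw [hcast]
      by_contra hcon
      have h6 : b < ∑ i, a i * bitZ (s i) := by exact_mod_cast not_le.1 hcon
      have := hI s h6
      linarith
    · exfalso
      have hconv : Convex ℝ {y : Fin n → ℝ | (b : ℝ) < ∑ i, (a i : ℝ) * y i} := by
        refine convex_halfSpace_gt ⟨?_, ?_⟩ _
        · intro y y'
          simp only [Pi.add_apply, mul_add, Finset.sum_add_distrib]
        · intro k y
          simp only [Pi.smul_apply, smul_eq_mul, Finset.mul_sum]
          exact Finset.sum_congr rfl fun i _ => by ring
      have := convexHull_min (t := {y : Fin n → ℝ | (b : ℝ) < ∑ i, (a i : ℝ) * y i}) ?_ hconv hmem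
      · exact absurd hxb (not_le.2 this)
      · rintro y ⟨s, rfl, hs⟩
        change (b : ℝ) < ∑ i, (a i : ℝ) * bitR (s i)
        rw [hcast]
        by_contra hcon
        have h6 : ∑ i, a i * bitZ (s i) ≤ b := by exact_mod_cast not_lt.1 hcon
        have := hF s h6
        linarith
end
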